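/- (Degree bounds in the induced item-item graph, Lemma A.2) Suppose np ≥ C κ₂² log(n) for a sufficiently large universal constant C > 0, mp ≥ 2, and m ≤ n^α for some constant α > 0. Then with probability at least 1 − 2n^{−10}, for all i ∈ [m], the weighted degree d_i := Σ_{j ≠ i} L_{ij} of item i in the item-item comparison graph G_Y satisfies np/(24 κ₂) ≤ d_i ≤ (3/2) np. -/

import Mathlib

open MeasureTheory ProbabilityTheory Matrix Finset

namespace RaschRP

variable {n m : ℕ}

/-- Probability that `X t i = 1` in the Rasch model. -/
noncomputable def q (ζ : Fin n → ℝ) (θ : Fin m → ℝ) (t : Fin n) (i : Fin m) : ℝ :=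
  Real.exp (θ i) / (Real.exp (ζ t) + Real.exp (θ i))

/-- The set of items observed by user `t` under the sampling configuration `a`. -/
def obs (a : Fin n → Fin m → Bool) (t : Fin n) : Finset (Fin m) :=
  Finset.univ.filter fun i => a t i = true

/-- `r` is a maximal disjoint pairing (partial matching with `⌊|s|/2⌋` pairs) of the
item set `s`. -/
def IsPairing (s : Finset (Fin m)) (r : Fin m → Fin m → Bool) : Prop :=
  (∀ i j, r i j = r j i) ∧ (∀ i, r i i = false) ∧
    (∀ i j, r i j = true → i ∈ s ∧ j ∈ s) ∧
    (∀ i j k, r i j = true → r i k = true → j = k) ∧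
    (Finset.univ.filter fun ij : Fin m × Fin m => ij.1 < ij.2 ∧ r ij.1 ij.2 = true).card
      = s.card / 2

/-- The number of maximal disjoint pairings of `s`. -/
noncomputable def pairingCount (s : Finset (Fin m)) : ℕ :=
  Nat.card {r : Fin m → Fin m → Bool // IsPairing s r}

/-- `ℓ t i j = true` iff items `i, j` were paired for user `t` and the two responses were
discordant (an effective item-item comparison). -/
def disc (x : Fin n → Fin m → Bool) (r : Fin n → Fin m → Fin m → Bool) :
    Fin n → Fin m → Fin m → Bool :=
  fun t i j => r t i j && (x t i != x t j)

/-- `L_{ij}`, the number of effective comparisons between items `i` and `j`. -/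
def Lcount (ℓ : Fin n → Fin m → Fin m → Bool) (i j : Fin m) : ℕ :=
  ∑ t, if ℓ t i j = true then 1 else 0

/-- The negative log-likelihood of the induced item-item (Bradley–Terry) comparisons:
`L(θ) = Σ_{i>j} Σ_{t : L^t_{ij} = 1} ( −Y^t_{ji}(θ_i − θ_j) + log(1 + e^{θ_i − θ_j}) )`. -/
noncomputable def loss (x : Fin n → Fin m → Bool) (ℓ : Fin n → Fin m → Fin m → Bool)
    (θ : Fin m → ℝ) : ℝ :=
  ∑ t, ∑ i, ∑ j,
    if j < i ∧ ℓ t i j = true then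
      -(if x t i = true ∧ x t j = false then θ i - θ j else 0)
        + Real.log (1 + Real.exp (θ i - θ j))
    else 0

/-- The Bradley–Terry variance weight `z_{ij}(θ) = e^{θ_i} e^{θ_j}/(e^{θ_i}+e^{θ_j})²`. -/
noncomputable def z (θ : Fin m → ℝ) (i j : Fin m) : ℝ :=
  Real.exp (θ i) * Real.exp (θ j) / (Real.exp (θ i) + Real.exp (θ j)) ^ 2

/-- The unweighted item-item Laplacian `L_L = Σ_{i>j} L_{ij}(e_i−e_j)(e_i−e_j)ᵀ`. -/
noncomputable def lapL (ℓ : Fin n → Fin m → Fin m → Bool) : Matrix (Fin m) (Fin m) ℝ :=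
  ∑ ij : Fin m × Fin m,
    if ij.2 < ij.1 then
      (Lcount ℓ ij.1 ij.2 : ℝ) •
        Matrix.vecMulVec (Pi.single ij.1 (1 : ℝ) - Pi.single ij.2 1)
          (Pi.single ij.1 (1 : ℝ) - Pi.single ij.2 1)
    else 0

/-- The weighted item-item Laplacian `L_{Lz̃} = Σ_{i>j} L_{ij} z̃_{ij}(e_i−e_j)(e_i−e_j)ᵀ`,
with weights `z̃ = z(θ)` computed from the parameter vector `θ`. -/
noncomputable def lapLz (θ : Fin m → ℝ) (ℓ : Fin n → Fin m → Fin m → Bool) :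
    Matrix (Fin m) (Fin m) ℝ :=
  ∑ ij : Fin m × Fin m,
    if ij.2 < ij.1 then
      ((Lcount ℓ ij.1 ij.2 : ℝ) * z θ ij.1 ij.2) •
        Matrix.vecMulVec (Pi.single ij.1 (1 : ℝ) - Pi.single ij.2 1)
          (Pi.single ij.1 (1 : ℝ) - Pi.single ij.2 1)
    else 0

/-- `Mdag` is the Moore–Penrose pseudo-inverse of `M`. -/
def IsMoorePenrose {k : ℕ} (M Mdag : Matrix (Fin k) (Fin k) ℝ) : Prop :=
  M * Mdag * M = M ∧ Mdag * M * Mdag = Mdag ∧ (M * Mdag)ᵀ = M * Mdag ∧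
    (Mdag * M)ᵀ = Mdag * M

open scoped Classical in
/-- The Moore–Penrose pseudo-inverse of a square real matrix. -/
noncomputable def pinv {k : ℕ} (M : Matrix (Fin k) (Fin k) ℝ) : Matrix (Fin k) (Fin k) ℝ :=
  if h : ∃ N, IsMoorePenrose M N then h.choose else 0

/-- The gradient `∇L(θ)` of the negative log-likelihood `loss`, evaluated via the explicit
formula `∇L(θ) = Σ_{i>j} Σ_{t : L^t_{ij}=1} (−Y^t_{ji} + σ(θ_i − θ_j)) (e_i − e_j)`. -/
noncomputable def gradLoss (θ : Fin m → ℝ) (x : Fin n → Fin m → Bool)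
    (ℓ : Fin n → Fin m → Fin m → Bool) : Fin m → ℝ :=
  fun l => ∑ t, ∑ i, ∑ j,
    if j < i ∧ ℓ t i j = true then
      (-(if x t i = true ∧ x t j = false then (1 : ℝ) else 0)
          + Real.exp (θ i) / (Real.exp (θ i) + Real.exp (θ j)))
        * ((if l = i then (1 : ℝ) else 0) - if l = j then 1 else 0)
    else 0

/-- The product `B ε̂ ∈ ℝ^m`, i.e.
`Σ_{i>j} Σ_{t : L^t_{ij}=1} (Y^t_{ji} − σ(θ⋆_i − θ⋆_j)) (e_i − e_j)`. -/
noncomputable def Beps (θ : Fin m → ℝ) (x : Fin n → Fin m → Bool)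
    (ℓ : Fin n → Fin m → Fin m → Bool) : Fin m → ℝ :=
  fun l => ∑ t, ∑ i, ∑ j,
    if j < i ∧ ℓ t i j = true then
      ((if x t i = true ∧ x t j = false then (1 : ℝ) else 0)
          - Real.exp (θ i) / (Real.exp (θ i) + Real.exp (θ j)))
        * ((if l = i then (1 : ℝ) else 0) - if l = j then 1 else 0)
    else 0

/-- The complete law of the data of the RP-MLE model with `K` independent random splittings:
the sampling indicators `A` are i.i.d. Bernoulli(`p`), the responses `X` are independent
with `P[X t i = 1] = e^{θ_i}/(e^{ζ_t}+e^{θ_i})`, and, conditionally on `A`, each of the `K`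
random pairings is uniformly distributed over the maximal disjoint pairings of each user's
observed items, independently of everything else. -/
def HasRaschLaw {Ω : Type*} [MeasurableSpace Ω] (P : Measure Ω) {K : ℕ}
    (p : ℝ) (ζ : Fin n → ℝ) (θ : Fin m → ℝ)
    (A X : Ω → Fin n → Fin m → Bool)
    (R : Ω → Fin K → Fin n → Fin m → Fin m → Bool) : Prop :=
  (∀ ω k t, IsPairing (obs (A ω) t) (R ω k t)) ∧
    ∀ (a x : Fin n → Fin m → Bool) (r : Fin K → Fin n → Fin m → Fin m → Bool),
      (∀ k' t, IsPairing (obs a t) (r k' t)) →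
      P {ω | A ω = a ∧ X ω = x ∧ R ω = r} =
        ENNReal.ofReal ((∏ t, ∏ i, if a t i then p else 1 - p) *
          (∏ t, ∏ i, if x t i then q ζ θ t i else 1 - q ζ θ t i) *
          ∏ k : Fin K, ∏ t, ((pairingCount (obs a t) : ℝ))⁻¹)

/-- `θhat` is an RP-MLE: a minimizer of the induced Bradley–Terry negative log-likelihood
over the hyperplane `{θ : 1ᵀθ = 0}`. -/
def IsRPMLE (x : Fin n → Fin m → Bool) (ℓ : Fin n → Fin m → Fin m → Bool)
    (θhat : Fin m → ℝ) : Prop :=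
  (∑ i, θhat i) = 0 ∧
    ∀ θ' : Fin m → ℝ, (∑ i, θ' i) = 0 → loss x ℓ θhat ≤ loss x ℓ θ'

end RaschRP

/-!
For a fixed item, each user contributes at most one to its degree, namely when the item is paired
with an item that received the other response from that user. Users are independent, so the degree
is a sum of `n` independent indicators. Their means are at most `p`, since the item has to be
observed, and at least `p / (6 κ)`: the item is observed together with another one with probability
at least `p / 2` because `m p ≥ 2`; it is then left unpaired with probability at most `1 / 3`, since
by symmetry all observed items are equally likely to be the odd one out; and two responses differ
with probability at least `1 / (2 κ)`. The theorem follows from Chernoff bounds for both tails and a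
union bound over the items.

`HasRaschLaw` prescribes only the point masses of the data, without any measurability of the
variables. Countable subadditivity still bounds the measure of every event by its probability under
the product law of the users, which is all that an upper bound on the failure probability needs.
-/

namespace RaschRP

section Probability

variable {Ω : Type*} [MeasurableSpace Ω]

lemma measure_preimage_le_of_forall_singleton {T : Type*} [Countable T] [MeasurableSpace T]
    [MeasurableSingletonClass T] {P : Measure Ω} {ν : Measure T} {F : Ω → T}
    (h : ∀ y, P (F ⁻¹' {y}) ≤ ν {y}) (S : Set T) : P (F ⁻¹' S) ≤ ν S := by
  calc P (F ⁻¹' S) = P (⋃ y ∈ S, F ⁻¹' {y}) := by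
        rw [← Set.preimage_iUnion₂, Set.biUnion_of_singleton]
    _ ≤ ∑' y : S, P (F ⁻¹' {(y : T)}) := measure_biUnion_le P S.to_countable _
    _ ≤ ∑' y : S, ν {(y : T)} := ENNReal.tsum_le_tsum fun y => h y
    _ = ν S := by
        rw [tsum_subtype S fun y => ν {y},
          ν.tsum_indicator_apply_singleton S S.to_countable.measurableSet]

lemma ofReal_one_sub_le_of_compl_le {P : Measure Ω} [IsProbabilityMeasure P] {s : Set Ω} {ε : ℝ}
    (hε : 0 ≤ ε) (h : P sᶜ ≤ ENNReal.ofReal ε) : ENNReal.ofReal (1 - ε) ≤ P s := by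
  rw [ENNReal.ofReal_sub _ hε, ENNReal.ofReal_one, tsub_le_iff_right]
  calc (1 : ENNReal) = P (s ∪ sᶜ) := by rw [Set.union_compl_self, measure_univ]
    _ ≤ P s + P sᶜ := measure_union_le _ _
    _ ≤ P s + ENNReal.ofReal ε := by gcongr

lemma sum_integral_nonneg_of_ae_mem_Icc {ι : Type*} [Fintype ι] {μ : Measure Ω} {Y : ι → Ω → ℝ}
    (hY : ∀ i, ∀ᵐ ω ∂μ, Y i ω ∈ Set.Icc 0 1) : 0 ≤ ∑ i, μ[Y i] :=
  Finset.sum_nonneg fun i _ => integral_nonneg_of_ae ((hY i).mono fun _ h => h.1)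

variable {μ : Measure Ω} [IsProbabilityMeasure μ]

lemma exp_mul_le_one_add_of_mem_Icc {y : ℝ} (hy : y ∈ Set.Icc 0 1) (l : ℝ) :
    Real.exp (l * y) ≤ 1 + (Real.exp l - 1) * y := by
  have h := convexOn_exp.2 (Set.mem_univ 0) (Set.mem_univ l) (sub_nonneg.2 hy.2) hy.1
    (sub_add_cancel 1 y)
  simp only [smul_eq_mul, mul_zero, zero_add, Real.exp_zero, mul_one] at h
  rw [mul_comm l]
  linarith

lemma mgf_le_exp_of_ae_mem_Icc {Y : Ω → ℝ} (hm : AEMeasurable Y μ)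
    (hY : ∀ᵐ ω ∂μ, Y ω ∈ Set.Icc 0 1) (l : ℝ) :
    mgf Y μ l ≤ Real.exp ((Real.exp l - 1) * μ[Y]) := by
  have hint : Integrable Y μ := Integrable.of_mem_Icc 0 1 hm hY
  calc mgf Y μ l ≤ ∫ ω, (1 + (Real.exp l - 1) * Y ω) ∂μ :=
        integral_mono_ae (integrable_exp_mul_of_mem_Icc hm hY)
          ((integrable_const 1).add (hint.const_mul _))
          (hY.mono fun ω hω => exp_mul_le_one_add_of_mem_Icc hω l)
    _ = (Real.exp l - 1) * μ[Y] + 1 := by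
        rw [integral_add (integrable_const 1) (hint.const_mul _), integral_const_mul]
        simp [add_comm]
    _ ≤ _ := Real.add_one_le_exp _

variable {ι : Type*} [Fintype ι] {Y : ι → Ω → ℝ}

lemma mgf_sum_le_exp_of_iIndepFun (hind : iIndepFun Y μ) (hm : ∀ i, AEMeasurable (Y i) μ)
    (hY : ∀ i, ∀ᵐ ω ∂μ, Y i ω ∈ Set.Icc 0 1) (l : ℝ) :
    mgf (fun ω => ∑ i, Y i ω) μ l ≤ Real.exp ((Real.exp l - 1) * ∑ i, μ[Y i]) := by
  rw [← Finset.sum_fn, hind.mgf_sum₀ hm, Finset.mul_sum, Real.exp_sum]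
  exact Finset.prod_le_prod (fun _ _ => mgf_nonneg) fun i _ =>
    mgf_le_exp_of_ae_mem_Icc (hm i) (hY i) l

lemma integrable_exp_mul_sum_of_ae_mem_Icc (hm : ∀ i, AEMeasurable (Y i) μ)
    (hY : ∀ i, ∀ᵐ ω ∂μ, Y i ω ∈ Set.Icc 0 1) (l : ℝ) :
    Integrable (fun ω => Real.exp (l * ∑ i, Y i ω)) μ := by
  refine integrable_exp_mul_of_mem_Icc (a := 0) (b := Fintype.card ι)
    (Finset.aemeasurable_fun_sum _ fun i _ => hm i) ?_
  filter_upwards [ae_all_iff.2 hY] with ω hω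
  refine ⟨Finset.sum_nonneg fun i _ => (hω i).1, ?_⟩
  simpa using Finset.sum_le_card_nsmul univ (Y · ω) 1 fun i _ => (hω i).2

lemma measureReal_ge_sum_le_exp (hind : iIndepFun Y μ) (hm : ∀ i, AEMeasurable (Y i) μ)
    (hY : ∀ i, ∀ᵐ ω ∂μ, Y i ω ∈ Set.Icc 0 1) {l : ℝ} (hl : 0 ≤ l) (c : ℝ) :
    μ.real {ω | c ≤ ∑ i, Y i ω} ≤ Real.exp (-l * c + (Real.exp l - 1) * ∑ i, μ[Y i]) := by
  rw [Real.exp_add]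
  refine (measure_ge_le_exp_mul_mgf c hl (integrable_exp_mul_sum_of_ae_mem_Icc hm hY l)).trans ?_
  gcongr
  exact mgf_sum_le_exp_of_iIndepFun hind hm hY l

lemma measureReal_le_sum_le_exp (hind : iIndepFun Y μ) (hm : ∀ i, AEMeasurable (Y i) μ)
    (hY : ∀ i, ∀ᵐ ω ∂μ, Y i ω ∈ Set.Icc 0 1) {l : ℝ} (hl : l ≤ 0) (c : ℝ) :
    μ.real {ω | ∑ i, Y i ω ≤ c} ≤ Real.exp (-l * c + (Real.exp l - 1) * ∑ i, μ[Y i]) := by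
  rw [Real.exp_add]
  refine (measure_le_le_exp_mul_mgf c hl (integrable_exp_mul_sum_of_ae_mem_Icc hm hY l)).trans ?_
  gcongr
  exact mgf_sum_le_exp_of_iIndepFun hind hm hY l

lemma measureReal_three_halves_mul_le_sum_le_exp (hind : iIndepFun Y μ)
    (hm : ∀ i, AEMeasurable (Y i) μ) (hY : ∀ i, ∀ᵐ ω ∂μ, Y i ω ∈ Set.Icc 0 1) {M : ℝ}
    (hM : ∑ i, μ[Y i] ≤ M) : μ.real {ω | 3 / 2 * M ≤ ∑ i, Y i ω} ≤ Real.exp (-M / 16) := by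
  refine (measureReal_ge_sum_le_exp hind hm hY (l := 1 / 4) (by norm_num) _).trans
    (Real.exp_le_exp.2 ?_)
  have hM0 : 0 ≤ M := (sum_integral_nonneg_of_ae_mem_Icc hY).trans hM
  have hexp : Real.exp (1 / 4) - 1 ≤ 5 / 16 := by
    have := (abs_le.1 (Real.abs_exp_sub_one_sub_id_le (x := 1 / 4) (by norm_num [abs_le]))).2
    linarith
  have hexp0 : 0 ≤ Real.exp (1 / 4) - 1 := by linarith [Real.add_one_le_exp (1 / 4)]
  have hmean : (Real.exp (1 / 4) - 1) * ∑ i, μ[Y i] ≤ 5 / 16 * M :=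
    (mul_le_mul_of_nonneg_left hM hexp0).trans (mul_le_mul_of_nonneg_right hexp hM0)
  linarith

lemma measureReal_sum_le_div_four_le_exp (hind : iIndepFun Y μ)
    (hm : ∀ i, AEMeasurable (Y i) μ) (hY : ∀ i, ∀ᵐ ω ∂μ, Y i ω ∈ Set.Icc 0 1) {M : ℝ}
    (hM : M ≤ ∑ i, μ[Y i]) : μ.real {ω | ∑ i, Y i ω ≤ M / 4} ≤ Real.exp (-M / 4) := by
  refine (measureReal_le_sum_le_exp hind hm hY (l := -1) (by norm_num) _).trans
    (Real.exp_le_exp.2 ?_)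
  have hmean : (Real.exp (-1) - 1) * ∑ i, μ[Y i] ≤ -(1 / 2) * ∑ i, μ[Y i] :=
    mul_le_mul_of_nonneg_right (by linarith [Real.exp_neg_one_lt_half])
      (sum_integral_nonneg_of_ae_mem_Icc hY)
  linarith

end Probability

section CompProd

variable {α β : Type*} [MeasurableSpace α] [MeasurableSpace β] {μ : Measure α} [IsFiniteMeasure μ]
  {κ : Kernel α β} [IsMarkovKernel κ] {s : Set α} {S : Set (α × β)}

lemma mul_measureReal_le_compProd (hs : MeasurableSet s) (hS : MeasurableSet S) {c : ℝ}
    (h : ∀ a ∈ s, c ≤ (κ a).real (Prod.mk a ⁻¹' S)) : c * μ.real s ≤ (μ ⊗ₘ κ).real S := by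
  rcases le_or_gt c 0 with hc | hc
  · exact (mul_nonpos_of_nonpos_of_nonneg hc measureReal_nonneg).trans measureReal_nonneg
  refine (ENNReal.ofReal_le_iff_le_toReal (measure_ne_top _ _)).1 ?_
  rw [ENNReal.ofReal_mul hc.le, ofReal_measureReal, Measure.compProd_apply hS]
  calc ENNReal.ofReal c * μ s = ∫⁻ _ in s, ENNReal.ofReal c ∂μ := (setLIntegral_const _ _).symm
    _ ≤ ∫⁻ a in s, κ a (Prod.mk a ⁻¹' S) ∂μ := setLIntegral_mono' hs fun a ha =>
        (ENNReal.ofReal_le_iff_le_toReal (measure_ne_top _ _)).2 (h a ha)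
    _ ≤ ∫⁻ a, κ a (Prod.mk a ⁻¹' S) ∂μ := setLIntegral_le_lintegral _ _

lemma compProd_real_le_of_forall_notMem (hs : MeasurableSet s) (hS : MeasurableSet S)
    (h : ∀ a ∉ s, (κ a).real (Prod.mk a ⁻¹' S) = 0) : (μ ⊗ₘ κ).real S ≤ μ.real s := by
  refine ENNReal.toReal_mono (measure_ne_top _ _) ?_
  rw [Measure.compProd_apply hS, ← lintegral_indicator_one hs]
  refine lintegral_mono fun a => ?_
  by_cases ha : a ∈ s
  · rw [Set.indicator_of_mem ha]
    exact prob_le_one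
  · rw [(measureReal_eq_zero_iff (measure_ne_top _ _)).1 (h a ha)]
    exact zero_le

lemma compProd_real_singleton [MeasurableSingletonClass α] [MeasurableSingletonClass β] (a : α)
    (b : β) : (μ ⊗ₘ κ).real {(a, b)} = μ.real {a} * (κ a).real {b} := by
  rw [← Set.singleton_prod_singleton, measureReal_def, Measure.compProd_apply_prod (.singleton a)
    (.singleton b), lintegral_singleton, ENNReal.toReal_mul, mul_comm]
  rfl

end CompProd

section Pairing

variable {m : ℕ} {s : Finset (Fin m)} {r : Fin m → Fin m → Bool}

/-- Item `i` has a partner in the pairing `r`. -/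
def IsMatched (r : Fin m → Fin m → Bool) (i : Fin m) : Prop :=
  ∃ j, r i j = true

open scoped Classical in
lemma card_isMatched_eq_two_mul (hsymm : ∀ i j, r i j = r j i) (hirrefl : ∀ i, r i i = false)
    (huniq : ∀ i j k, r i j = true → r i k = true → j = k) :
    #{i | IsMatched r i} = 2 * #{ij : Fin m × Fin m | ij.1 < ij.2 ∧ r ij.1 ij.2 = true} := by
  set S : Finset (Fin m × Fin m) := {ij | ij.1 < ij.2 ∧ r ij.1 ij.2 = true} with hS
  have hfst : Set.InjOn Prod.fst (S : Set (Fin m × Fin m)) := by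
    rintro ⟨i, j⟩ hij ⟨i', k⟩ hik (rfl : i = i')
    simp only [hS, coe_filter, mem_univ, true_and, Set.mem_ofPred_eq] at hij hik
    rw [huniq i j k hij.2 hik.2]
  have hsnd : Set.InjOn Prod.snd (S : Set (Fin m × Fin m)) := by
    rintro ⟨j, i⟩ hji ⟨k, i'⟩ hki (rfl : i = i')
    simp only [hS, coe_filter, mem_univ, true_and, Set.mem_ofPred_eq] at hji hki
    rw [huniq i j k ((hsymm i j).trans hji.2) ((hsymm i k).trans hki.2)]
  have hdisj : Disjoint (S.image Prod.fst) (S.image Prod.snd) := by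
    simp only [disjoint_left, mem_image, hS, mem_filter_univ, Prod.exists, exists_and_right,
      exists_eq_right, not_exists, not_and, forall_exists_index, and_imp]
    intro i j hij hr k hki hrk
    have hjk := huniq i j k hr ((hsymm i k).trans hrk)
    exact absurd (hij.trans_eq hjk) hki.asymm
  have hunion : ({i | IsMatched r i} : Finset (Fin m)) = S.image Prod.fst ∪ S.image Prod.snd := by
    ext i
    simp only [hS, mem_filter, mem_univ, true_and, mem_union, mem_image, Prod.exists,
      exists_and_right, exists_eq_right, ← exists_or]
    refine exists_congr fun j => ?_
    rcases lt_trichotomy i j with hij | rfl | hij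
    · simp [hij, hij.not_gt]
    · simp [hirrefl]
    · simp [hij, hij.not_gt, hsymm i j]
  rw [hunion, card_union_of_disjoint hdisj, card_image_of_injOn hfst, card_image_of_injOn hsnd,
    two_mul]

open scoped Classical in
lemma isPairing_iff : IsPairing s r ↔ (∀ i j, r i j = r j i) ∧ (∀ i, r i i = false) ∧
    (∀ i j, r i j = true → i ∈ s ∧ j ∈ s) ∧ (∀ i j k, r i j = true → r i k = true → j = k) ∧
    #{i | IsMatched r i} = 2 * (#s / 2) := by
  unfold IsPairing
  refine and_congr_right fun hsymm => and_congr_right fun hirrefl => and_congr_right fun _ =>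
    and_congr_right fun huniq => ?_
  rw [card_isMatched_eq_two_mul hsymm hirrefl huniq, Nat.mul_right_inj two_ne_zero]

lemma IsPairing.mem_of_isMatched (h : IsPairing s r) {i : Fin m} (hi : IsMatched r i) : i ∈ s :=
  let ⟨j, hj⟩ := hi
  (h.2.2.1 i j hj).1

-- Enumerate `s` and pair the positions `2k` and `2k + 1`.
open scoped Classical in
lemma exists_isPairing (s : Finset (Fin m)) : ∃ r, IsPairing s r := by
  set e := s.orderEmbOfFin rfl
  refine ⟨fun i j => decide (∃ k l : Fin #s, k ≠ l ∧ (k : ℕ) / 2 = l / 2 ∧ e k = i ∧ e l = j),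
    isPairing_iff.2 ⟨fun i j => ?_, fun i => ?_, fun i j h => ?_, fun i j j' hj hj' => ?_, ?_⟩⟩
  · grind
  · grind [e.injective.eq_iff]
  · simp only [decide_eq_true_eq] at h
    obtain ⟨k, l, -, -, rfl, rfl⟩ := h
    exact ⟨s.orderEmbOfFin_mem rfl k, s.orderEmbOfFin_mem rfl l⟩
  · simp only [decide_eq_true_eq] at hj hj'
    obtain ⟨k, l, hkl, hdiv, rfl, rfl⟩ := hj
    obtain ⟨k', l', hkl', hdiv', hk, rfl⟩ := hj'
    obtain rfl := e.injective hk
    congr 1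
    omega
  · have himage : ({i | IsMatched (fun i j => decide (∃ k l : Fin #s, k ≠ l ∧ (k : ℕ) / 2 = l / 2 ∧
        e k = i ∧ e l = j)) i} : Finset (Fin m)) =
        ({k | (k : ℕ) < 2 * (#s / 2)} : Finset (Fin #s)).image e := by
      ext i
      simp only [IsMatched, mem_filter_univ, mem_image, decide_eq_true_eq]
      constructor
      · rintro ⟨j, k, l, hkl, hdiv, rfl, -⟩
        exact ⟨k, by omega, rfl⟩
      · rintro ⟨k, hk, rfl⟩
        refine ⟨_, k, ⟨4 * (k / 2) + 1 - k, by omega⟩, ?_, ?_, rfl, rfl⟩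
        · rw [Ne, Fin.ext_iff]
          simp only
          omega
        · simp only
          omega
    rw [himage, card_image_of_injective _ e.injective, Fin.card_filter_val_lt]
    omega

lemma isMatched_comp_perm_iff (σ : Equiv.Perm (Fin m)) {i : Fin m} :
    IsMatched (fun a b => r (σ a) (σ b)) i ↔ IsMatched r (σ i) :=
  σ.exists_congr_left.trans (by simp [IsMatched])

open scoped Classical in
lemma IsPairing.comp_perm (h : IsPairing s r) {σ : Equiv.Perm (Fin m)}
    (hσ : ∀ k, σ k ∈ s ↔ k ∈ s) : IsPairing s (fun a b => r (σ a) (σ b)) := by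
  obtain ⟨hsymm, hirrefl, hmem, huniq, hcard⟩ := isPairing_iff.1 h
  refine isPairing_iff.2 ⟨fun a b => hsymm _ _, fun a => hirrefl _, fun a b hab => ?_,
    fun a b c hb hc => σ.injective (huniq _ _ _ hb hc), ?_⟩
  · simpa only [hσ] using hmem _ _ hab
  · rw [← hcard]
    exact card_equiv σ fun i => by simp only [mem_filter_univ, isMatched_comp_perm_iff]

open scoped Classical in
lemma card_pairings_isMatched_congr {i j : Fin m} (hi : i ∈ s) (hj : j ∈ s) :
    #{r | IsPairing s r ∧ IsMatched r i} = #{r | IsPairing s r ∧ IsMatched r j} := by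
  have hσ : ∀ k, Equiv.swap i j k ∈ s ↔ k ∈ s := by grind
  refine card_nbij' (fun r a b => r (Equiv.swap i j a) (Equiv.swap i j b))
    (fun r a b => r (Equiv.swap i j a) (Equiv.swap i j b)) ?_ ?_ ?_ ?_
  · rintro r hr
    simp only [coe_filter, mem_univ, true_and, Set.mem_ofPred_eq] at hr ⊢
    exact ⟨hr.1.comp_perm hσ, (isMatched_comp_perm_iff _).2 (by simpa using hr.2)⟩
  · rintro r hr
    simp only [coe_filter, mem_univ, true_and, Set.mem_ofPred_eq] at hr ⊢
    exact ⟨hr.1.comp_perm hσ, (isMatched_comp_perm_iff _).2 (by simpa using hr.2)⟩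
  · intro r _
    simp
  · intro r _
    simp

open scoped Classical in
lemma pairingCount_eq_card (s : Finset (Fin m)) : pairingCount s = #{r | IsPairing s r} := by
  rw [pairingCount, Nat.card_eq_fintype_card, Fintype.card_subtype]

open scoped Classical in
lemma card_mul_card_pairings_isMatched {i : Fin m} (hi : i ∈ s) :
    #s * #{r | IsPairing s r ∧ IsMatched r i} = pairingCount s * (2 * (#s / 2)) := by
  have hdouble := sum_card_bipartiteAbove_eq_sum_card_bipartiteBelow
    (s := s) (t := ({r | IsPairing s r} : Finset (Fin m → Fin m → Bool))) fun k r => IsMatched r k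
  have hitems : ∀ k ∈ s, #(bipartiteAbove (fun k r => IsMatched r k) {r | IsPairing s r} k) =
      #{r | IsPairing s r ∧ IsMatched r i} := fun k hk => by
    rw [bipartiteAbove, filter_filter, card_pairings_isMatched_congr hk hi]
  have hpairings : ∀ r ∈ ({r | IsPairing s r} : Finset (Fin m → Fin m → Bool)),
      #(bipartiteBelow (fun k r => IsMatched r k) s r) = 2 * (#s / 2) := fun r hr => by
    rw [mem_filter_univ] at hr
    rw [← (isPairing_iff.1 hr).2.2.2.2, bipartiteBelow]
    congr 1
    ext k
    simpa using hr.mem_of_isMatched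
  rwa [sum_congr rfl hitems, sum_congr rfl hpairings, sum_const, sum_const, smul_eq_mul,
    smul_eq_mul, ← pairingCount_eq_card] at hdouble

end Pairing

section PairingLaw

variable {m : ℕ} {s : Finset (Fin m)}

/-- The law of the random pairing of a user who observed the item set `s`. -/
noncomputable def pairingLaw (s : Finset (Fin m)) : Measure (Fin m → Fin m → Bool) :=
  uniformOn {r | IsPairing s r}

instance (s : Finset (Fin m)) : IsProbabilityMeasure (pairingLaw s) :=
  isProbabilityMeasure_uniformOn (Set.toFinite _) (exists_isPairing s)

open scoped Classical in
lemma pairingLaw_real_apply (s : Finset (Fin m)) (Q : (Fin m → Fin m → Bool) → Prop)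
    [DecidablePred Q] :
    (pairingLaw s).real {r | Q r} = #{r | IsPairing s r ∧ Q r} / (pairingCount s : ℝ) := by
  have h := uniformOn_apply_finset (s := {r | IsPairing s r}) (t := {r | Q r})
  simp only [coe_filter, mem_univ, true_and, ← filter_and] at h
  rw [measureReal_def, pairingLaw, h, pairingCount_eq_card, ENNReal.toReal_div,
    ENNReal.toReal_natCast, ENNReal.toReal_natCast]

lemma pairingCount_pos (s : Finset (Fin m)) : 0 < pairingCount s := by
  classical
  obtain ⟨r, hr⟩ := exists_isPairing s
  rw [pairingCount_eq_card, card_pos]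
  exact ⟨r, by simpa using hr⟩

lemma pairingLaw_real_singleton {r : Fin m → Fin m → Bool} (hr : IsPairing s r) :
    (pairingLaw s).real {r} = (pairingCount s : ℝ)⁻¹ := by
  classical
  have hfilter : ({r' | IsPairing s r' ∧ r' = r} : Finset (Fin m → Fin m → Bool)) = {r} := by
    grind
  rw [← Set.ofPred_eq_eq_singleton, pairingLaw_real_apply, hfilter, card_singleton, Nat.cast_one,
    one_div]

lemma pairingLaw_isMatched_eq_zero {i : Fin m} (hi : i ∉ s) :
    (pairingLaw s).real {r | IsMatched r i} = 0 := by
  classical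
  have hfilter : ({r | IsPairing s r ∧ IsMatched r i} : Finset (Fin m → Fin m → Bool)) = ∅ :=
    filter_false_of_mem fun r _ h => hi (h.1.mem_of_isMatched h.2)
  rw [pairingLaw_real_apply, hfilter, card_empty, Nat.cast_zero, zero_div]

lemma two_thirds_le_pairingLaw_isMatched {i : Fin m} (hi : i ∈ s) (hs : 2 ≤ #s) :
    2 / 3 ≤ (pairingLaw s).real {r | IsPairing s r ∧ IsMatched r i} := by
  classical
  have hcount := card_mul_card_pairings_isMatched hi
  have hhalf : 2 * #s ≤ 3 * (2 * (#s / 2)) := by omega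
  simp only [pairingLaw_real_apply, and_self_left]
  set N := #{r | IsPairing s r ∧ IsMatched r i}
  have hN : 2 * pairingCount s ≤ 3 * N := by
    refine Nat.le_of_mul_le_mul_left ?_ (show 0 < #s by omega)
    calc #s * (2 * pairingCount s) = 2 * #s * pairingCount s := by ring
      _ ≤ 3 * (2 * (#s / 2)) * pairingCount s := by gcongr
      _ = 3 * (#s * N) := by rw [hcount]; ring
      _ = #s * (3 * N) := by ring
  rw [div_le_div_iff₀ (by norm_num) (mod_cast pairingCount_pos s), mul_comm (N : ℝ)]
  exact_mod_cast hN

end PairingLaw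

section Coins

variable {ι : Type*} [Fintype ι]

/-- The law of independent coin flips, the `i`-th of which shows `true` with probability `u i`. -/
noncomputable def coinLaw (u : ι → unitInterval) : Measure (ι → Bool) :=
  Measure.pi fun i => bernoulliMeasure true false (u i)

instance (u : ι → unitInterval) : IsProbabilityMeasure (coinLaw u) :=
  inferInstanceAs (IsProbabilityMeasure (Measure.pi _))

lemma bernoulliMeasure_true_false_real_singleton (p : unitInterval) (b : Bool) :
    (bernoulliMeasure true false p).real {b} = if b then (p : ℝ) else 1 - p := by
  cases b <;> simp

lemma coinLaw_real_pi_singleton (u : ι → unitInterval) (s : Finset ι) (b : ι → Bool) :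
    (coinLaw u).real ((s : Set ι).pi fun i => {b i}) =
      ∏ i ∈ s, if b i then (u i : ℝ) else 1 - u i := by
  simp only [measureReal_def, coinLaw, Measure.pi_pi_finset, ENNReal.toReal_prod,
    ← bernoulliMeasure_true_false_real_singleton]

lemma coinLaw_real_singleton (u : ι → unitInterval) (b : ι → Bool) :
    (coinLaw u).real {b} = ∏ i, if b i then (u i : ℝ) else 1 - u i := by
  rw [← coinLaw_real_pi_singleton, coe_univ, Set.univ_pi_singleton]

lemma coinLaw_real_eval_eq_true (u : ι → unitInterval) (i : ι) :
    (coinLaw u).real {b | b i = true} = u i := by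
  simpa [Set.pi] using coinLaw_real_pi_singleton u {i} fun _ => true

lemma coinLaw_real_eval_ne_eval (u : ι → unitInterval) {i j : ι} (hij : i ≠ j) :
    (coinLaw u).real {b | b i ≠ b j} = u i * (1 - u j) + u j * (1 - u i) := by
  classical
  have hbox (b : ι → Bool) := coinLaw_real_pi_singleton u {i, j} b
  have hunion : {b : ι → Bool | b i ≠ b j} =
      (({i, j} : Finset ι) : Set ι).pi (fun k => {decide (k = i)}) ∪
        (({i, j} : Finset ι) : Set ι).pi (fun k => {decide (k = j)}) := by
    ext b
    simp only [coe_insert, coe_singleton, Set.insert_pi, Set.singleton_pi]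
    cases hi : b i <;> cases hj : b j <;> simp [hi, hj, hij, hij.symm]
  have hdisj : Disjoint ((({i, j} : Finset ι) : Set ι).pi (fun k => {decide (k = i)}))
      ((({i, j} : Finset ι) : Set ι).pi fun k => {decide (k = j)}) := by
    rw [Set.disjoint_left]
    intro b hb hb'
    simpa [hij] using (hb i (by simp)).symm.trans (hb' i (by simp))
  rw [hunion, measureReal_union hdisj (Set.toFinite _).measurableSet, hbox, hbox,
    prod_pair hij, prod_pair hij]
  simp [hij, hij.symm]
  ring

lemma coinLaw_real_eval_and_two_le_card (p : unitInterval) (i : ι) :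
    (coinLaw fun _ : ι => p).real {b | b i = true ∧ 2 ≤ #{j | b j = true}} =
      p * (1 - (1 - p) ^ (Fintype.card ι - 1)) := by
  classical
  have hdiff : {b : ι → Bool | b i = true ∧ 2 ≤ #{j | b j = true}} =
      {b | b i = true} \ {fun j => decide (j = i)} := by
    ext b
    simp only [Set.mem_ofPred_eq, Set.mem_sdiff, Set.mem_singleton_iff]
    refine and_congr_right fun hi => ?_
    constructor
    · rintro hcard rfl
      obtain ⟨j, hj, hji⟩ := exists_mem_ne hcard i
      exact hji (by simpa using hj)
    · intro hb
      obtain ⟨j, hj⟩ := Function.ne_iff.1 hb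
      exact one_lt_card.2 ⟨i, by simpa using hi, j, by grind⟩
  rw [hdiff, measureReal_sdiff (by simp) (measurableSet_singleton _), coinLaw_real_eval_eq_true,
    coinLaw_real_singleton, ← mul_prod_erase univ _ (mem_univ i),
    prod_congr rfl (g := fun _ => (1 - p : ℝ)) (by simp +contextual)]
  simp
  ring

end Coins

section UserLaw

variable {m K : ℕ}

/-- Item `i` is effectively compared: it is paired with an item that received the other
response. -/
def IsCompared (x : Fin m → Bool) (r : Fin m → Fin m → Bool) (i : Fin m) : Prop :=
  ∃ j, r i j = true ∧ x i ≠ x j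

/-- The conditional law of the `K` random pairings of a user, given which items are observed. -/
noncomputable def splitKernel (m K : ℕ) :
    Kernel (Fin m → Bool) (Fin K → Fin m → Fin m → Bool) :=
  Kernel.ofFunOfCountable fun a => Measure.pi fun _ => pairingLaw {i | a i = true}

instance : IsMarkovKernel (splitKernel m K) :=
  ⟨fun _ => inferInstanceAs (IsProbabilityMeasure (Measure.pi _))⟩

lemma splitKernel_real_eval (a : Fin m → Bool) (k : Fin K) (Q : (Fin m → Fin m → Bool) → Prop) :
    (splitKernel m K a).real {r | Q (r k)} = (pairingLaw {i | a i = true}).real {r | Q r} :=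
  (measurePreserving_eval (fun _ : Fin K => pairingLaw {i | a i = true}) k).measureReal_preimage
    (Set.toFinite {r | Q r}).measurableSet.nullMeasurableSet

lemma splitKernel_real_singleton {a : Fin m → Bool} {r : Fin K → Fin m → Fin m → Bool}
    (hr : ∀ k, IsPairing {i | a i = true} (r k)) :
    (splitKernel m K a).real {r} = ∏ _k : Fin K, (pairingCount {i | a i = true} : ℝ)⁻¹ := by
  rw [measureReal_def]
  change (Measure.pi _ _).toReal = _
  rw [Measure.pi_singleton, ENNReal.toReal_prod]
  exact prod_congr rfl fun k _ => pairingLaw_real_singleton (hr k)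

/-- The data `((a, r), x)` of a single user: the observation indicators `a`, the `K` pairings `r`,
and the responses `x`. -/
abbrev UserData (m K : ℕ) : Type :=
  ((Fin m → Bool) × (Fin K → Fin m → Fin m → Bool)) × (Fin m → Bool)

/-- The law of the data of a single user, whose answer to item `i` is `true` with probability
`u i`. -/
noncomputable def userLaw (K : ℕ) (p : unitInterval) (u : Fin m → unitInterval) :
    Measure (UserData m K) :=
  ((coinLaw fun _ => p) ⊗ₘ splitKernel m K).prod (coinLaw u)

variable {p : unitInterval} {u : Fin m → unitInterval}

instance : IsProbabilityMeasure (userLaw K p u) :=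
  inferInstanceAs (IsProbabilityMeasure (Measure.prod _ _))

lemma userLaw_real_singleton {a : Fin m → Bool} {r : Fin K → Fin m → Fin m → Bool}
    (hr : ∀ k, IsPairing {i | a i = true} (r k)) (x : Fin m → Bool) :
    (userLaw K p u).real {((a, r), x)} =
      (∏ i, if a i then (p : ℝ) else 1 - p) *
        (∏ _k : Fin K, (pairingCount {i | a i = true} : ℝ)⁻¹) *
        ∏ i, if x i then (u i : ℝ) else 1 - u i := by
  rw [userLaw, ← Set.singleton_prod_singleton, measureReal_prod_prod, compProd_real_singleton,
    splitKernel_real_singleton hr, coinLaw_real_singleton, coinLaw_real_singleton]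

lemma userLaw_real_isCompared_le (k : Fin K) (i : Fin m) :
    (userLaw K p u).real {y | IsCompared y.2 (y.1.2 k) i} ≤ p := by
  have hmatched (a : Fin m → Bool) (ha : a ∉ {a | a i = true}) :
      (splitKernel m K a).real {r | IsMatched (r k) i} = 0 := by
    rw [splitKernel_real_eval a k (IsMatched · i)]
    exact pairingLaw_isMatched_eq_zero (by simpa using ha)
  calc (userLaw K p u).real {y | IsCompared y.2 (y.1.2 k) i}
      ≤ (userLaw K p u).real ({y | IsMatched (y.2 k) i} ×ˢ Set.univ) :=
        measureReal_mono fun y ⟨j, hj, _⟩ => ⟨⟨j, hj⟩, trivial⟩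
    _ = ((coinLaw fun _ => p) ⊗ₘ splitKernel m K).real {y | IsMatched (y.2 k) i} := by
        rw [userLaw, measureReal_prod_prod, probReal_univ, mul_one]
    _ ≤ (coinLaw fun _ => p).real {a | a i = true} :=
        compProd_real_le_of_forall_notMem (Set.toFinite _).measurableSet
          (Set.toFinite _).measurableSet hmatched
    _ = p := coinLaw_real_eval_eq_true _ i

lemma le_userLaw_real_isCompared (k : Fin K) {i : Fin m} {δ : ℝ} (hδ0 : 0 ≤ δ)
    (hδ : ∀ j, i ≠ j → δ ≤ u i * (1 - u j) + u j * (1 - u i)) :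
    δ * (2 / 3 * (p * (1 - (1 - p) ^ (m - 1)))) ≤
      (userLaw K p u).real {y | IsCompared y.2 (y.1.2 k) i} := by
  have hmatched : 2 / 3 * (p * (1 - (1 - p) ^ (m - 1))) ≤
      ((coinLaw fun _ => p) ⊗ₘ splitKernel m K).real
        {y | IsPairing {i | y.1 i = true} (y.2 k) ∧ IsMatched (y.2 k) i} := by
    have hobs := coinLaw_real_eval_and_two_le_card p i
    rw [Fintype.card_fin] at hobs
    rw [← hobs]
    refine mul_measureReal_le_compProd (Set.toFinite _).measurableSet
      (Set.toFinite _).measurableSet fun a ha => ?_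
    exact (two_thirds_le_pairingLaw_isMatched (by simpa using ha.1) ha.2).trans_eq
      (splitKernel_real_eval a k fun r => IsPairing {i | a i = true} r ∧ IsMatched r i).symm
  rw [userLaw, ← Measure.compProd_const]
  refine (mul_le_mul_of_nonneg_left hmatched hδ0).trans ?_
  refine mul_measureReal_le_compProd (Set.toFinite _).measurableSet
    (Set.toFinite _).measurableSet ?_
  rintro ⟨a, r⟩ ⟨hr, j, hj⟩
  have hij : i ≠ j := by
    rintro rfl
    exact Bool.false_ne_true ((hr.2.1 i).symm.trans hj)
  calc δ ≤ (coinLaw u).real {x | x i ≠ x j} := by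
        rw [coinLaw_real_eval_ne_eval u hij]
        exact hδ j hij
    _ ≤ (coinLaw u).real {x | IsCompared x (r k) i} := measureReal_mono fun x hx => ⟨j, hj, hx⟩

end UserLaw

section Rasch

variable {n m K : ℕ} {p : unitInterval} {ζ : Fin n → ℝ} {θ : Fin m → ℝ}

lemma q_eq_sigmoid (ζ : Fin n → ℝ) (θ : Fin m → ℝ) (t : Fin n) (i : Fin m) :
    q ζ θ t i = Real.sigmoid (θ i - ζ t) := by
  rw [q, Real.sigmoid_def, neg_sub, Real.exp_sub]
  field_simp
  ring

lemma sigmoid_neg_log {κ : ℝ} (hκ : 0 < κ) : Real.sigmoid (-Real.log κ) = (1 + κ)⁻¹ := by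
  rw [Real.sigmoid_def, neg_neg, Real.exp_log hκ]

lemma sigmoid_mem_Icc_of_abs_le {x κ : ℝ} (hκ : 0 < κ) (h : |x| ≤ Real.log κ) :
    Real.sigmoid x ∈ Set.Icc (1 + κ)⁻¹ (1 - (1 + κ)⁻¹) := by
  rw [← sigmoid_neg_log hκ, ← Real.sigmoid_neg, neg_neg]
  exact ⟨Real.sigmoid_le (abs_le.1 h).1, Real.sigmoid_le (abs_le.1 h).2⟩

lemma two_mul_one_sub_le_of_mem_Icc {a b c : ℝ} (ha : a ∈ Set.Icc c (1 - c))
    (hb : b ∈ Set.Icc c (1 - c)) : 2 * (c * (1 - c)) ≤ a * (1 - b) + b * (1 - a) := by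
  have habs {x : ℝ} (hx : x ∈ Set.Icc c (1 - c)) : |x - 1 / 2| ≤ 1 / 2 - c :=
    abs_le.2 ⟨by linarith [hx.1], by linarith [hx.2]⟩
  have hprod : (a - 1 / 2) * (b - 1 / 2) ≤ (1 / 2 - c) * (1 / 2 - c) :=
    (le_abs_self _).trans <| (abs_mul _ _).trans_le <|
      mul_le_mul (habs ha) (habs hb) (abs_nonneg _) ((abs_nonneg _).trans (habs ha))
  linarith

lemma inv_two_mul_le_discordance {x y κ : ℝ} (hκ : 1 ≤ κ) (hx : |x| ≤ Real.log κ)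
    (hy : |y| ≤ Real.log κ) :
    (2 * κ)⁻¹ ≤
      Real.sigmoid x * (1 - Real.sigmoid y) + Real.sigmoid y * (1 - Real.sigmoid x) := by
  have hκ0 : 0 < κ := one_pos.trans_le hκ
  refine le_trans ?_ (two_mul_one_sub_le_of_mem_Icc (sigmoid_mem_Icc_of_abs_le hκ0 hx)
    (sigmoid_mem_Icc_of_abs_le hκ0 hy))
  have hvar : 2 * ((1 + κ)⁻¹ * (1 - (1 + κ)⁻¹)) = 2 * κ / (1 + κ) ^ 2 := by
    field_simp
    ring
  rw [hvar, inv_eq_one_div, div_le_div_iff₀ (by positivity) (by positivity)]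
  nlinarith

lemma half_le_one_sub_one_sub_pow {p : ℝ} (hp : p ≤ 1) {m : ℕ} (hm : 2 ≤ m * p) :
    1 / 2 ≤ 1 - (1 - p) ^ (m - 1) := by
  have hm1 : 1 ≤ m := by
    by_contra! h
    obtain rfl : m = 0 := by omega
    norm_num at hm
  have hpow : (1 - p) ^ (m - 1) ≤ Real.exp (-1) := by
    calc (1 - p) ^ (m - 1) ≤ Real.exp (-p) ^ (m - 1) :=
          pow_le_pow_left₀ (sub_nonneg.2 hp) (Real.one_sub_le_exp_neg p) _
      _ = Real.exp (-((m - 1 : ℕ) * p)) := by rw [← Real.exp_nat_mul, mul_neg]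
      _ ≤ Real.exp (-1) := by
          rw [Nat.cast_sub hm1, Real.exp_le_exp]
          push_cast
          linarith
  linarith [Real.exp_neg_one_lt_half]

/-- The joint law of the data of all users in the Rasch model. -/
noncomputable def raschLaw (K : ℕ) (p : unitInterval) (ζ : Fin n → ℝ) (θ : Fin m → ℝ) :
    Measure (Fin n → UserData m K) :=
  Measure.pi fun t => userLaw K p fun i => unitInterval.sigmoid (θ i - ζ t)

instance : IsProbabilityMeasure (raschLaw K p ζ θ) :=
  inferInstanceAs (IsProbabilityMeasure (Measure.pi _))

lemma raschLaw_singleton {a x : Fin n → Fin m → Bool} {r : Fin K → Fin n → Fin m → Fin m → Bool}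
    (hr : ∀ k t, IsPairing (obs a t) (r k t)) :
    raschLaw K p ζ θ {fun t => ((a t, (r · t)), x t)} =
      ENNReal.ofReal ((∏ t, ∏ i, if a t i then (p : ℝ) else 1 - p) *
        (∏ t, ∏ i, if x t i then q ζ θ t i else 1 - q ζ θ t i) *
        ∏ _k : Fin K, ∏ t, (pairingCount (obs a t) : ℝ)⁻¹) := by
  rw [raschLaw, Measure.pi_singleton, ← ENNReal.ofReal_toReal (ENNReal.prod_ne_top fun t _ =>
    measure_ne_top _ _), ENNReal.toReal_prod]
  congr 1
  rw [prod_comm (s := (univ : Finset (Fin K))), ← prod_mul_distrib, ← prod_mul_distrib]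
  refine prod_congr rfl fun t _ => (userLaw_real_singleton (fun k => hr k t) (x t)).trans ?_
  simp only [q_eq_sigmoid]
  exact mul_right_comm _ _ _

lemma HasRaschLaw.measure_preimage_le {Ω : Type*} [MeasurableSpace Ω] {P : Measure Ω}
    {A X : Ω → Fin n → Fin m → Bool} {R : Ω → Fin K → Fin n → Fin m → Fin m → Bool}
    (h : HasRaschLaw P p ζ θ A X R)
    (S : Set (Fin n → UserData m K)) :
    P {ω | (fun t => ((A ω t, (R ω · t)), X ω t)) ∈ S} ≤ raschLaw K p ζ θ S := by
  refine measure_preimage_le_of_forall_singleton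
    (F := fun ω t => ((A ω t, (R ω · t)), X ω t)) (fun y => ?_) S
  by_cases hy : ∀ k t, IsPairing (obs (fun t => (y t).1.1) t) ((y t).1.2 k)
  · have hfiber : (fun ω t => ((A ω t, (R ω · t)), X ω t)) ⁻¹' {y} =
        {ω | A ω = (fun t => (y t).1.1) ∧ X ω = (fun t => (y t).2) ∧
          R ω = fun k t => (y t).1.2 k} := by
      ext ω
      constructor
      · rintro rfl
        exact ⟨rfl, rfl, rfl⟩
      · rintro ⟨hA, hX, hR⟩
        simp [hA, hX, hR]
    rw [hfiber, h.2 _ _ _ hy, ← raschLaw_singleton hy]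
  · have hfiber : (fun ω t => ((A ω t, (R ω · t)), X ω t)) ⁻¹' {y} = ∅ := by
      rw [Set.eq_empty_iff_forall_notMem]
      rintro ω rfl
      exact hy (h.1 ω)
    rw [hfiber, measure_empty]
    exact zero_le

end Rasch

lemma two_mul_mul_exp_neg_le_two_div_pow {α N M x κ : ℝ} (hα : 0 ≤ α) (hN : 1 ≤ N) (hκ : 1 ≤ κ)
    (hx : 24 * (10 + α) * κ ^ 2 * Real.log N ≤ x) (hM : M ≤ N ^ α) :
    2 * M * Real.exp (-x / (24 * κ)) ≤ 2 / N ^ 10 := by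
  have hN0 : 0 < N := one_pos.trans_le hN
  have : 0 < κ := one_pos.trans_le hκ
  have hrate : (10 + α) * Real.log N ≤ x / (24 * κ) := by
    rw [le_div_iff₀ (by positivity)]
    have hκκ : κ ≤ κ ^ 2 := le_self_pow₀ hκ two_ne_zero
    calc (10 + α) * Real.log N * (24 * κ) = 24 * (10 + α) * κ * Real.log N := by ring
      _ ≤ 24 * (10 + α) * κ ^ 2 * Real.log N := by
          gcongr
          exact Real.log_nonneg hN
      _ ≤ x := hx
  have hexp : Real.exp (-x / (24 * κ)) ≤ N ^ (-(10 + α)) := by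
    rw [Real.rpow_def_of_pos hN0, Real.exp_le_exp, neg_div]
    linarith
  calc 2 * M * Real.exp (-x / (24 * κ)) ≤ 2 * N ^ α * N ^ (-(10 + α)) := by gcongr
    _ = 2 * N ^ (-10 : ℝ) := by
        rw [mul_assoc, ← Real.rpow_add hN0]
        ring_nf
    _ = 2 / N ^ 10 := by
        rw [Real.rpow_neg hN0.le, div_eq_mul_inv]
        norm_cast

section Degree

variable {n m K : ℕ} {p : unitInterval} {ζ : Fin n → ℝ} {θ : Fin m → ℝ} {κ : ℝ}

open scoped Classical in
lemma sum_Lcount_disc_eq_card {x : Fin n → Fin m → Bool} {r : Fin n → Fin m → Fin m → Bool}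
    (hr : ∀ t i j k, r t i j = true → r t i k = true → j = k) (i : Fin m) :
    (∑ j, if j ≠ i then Lcount (disc x r) i j else 0) = #{t | IsCompared (x t) (r t) i} := by
  calc (∑ j, if j ≠ i then Lcount (disc x r) i j else 0) = ∑ j, Lcount (disc x r) i j := by
        refine sum_congr rfl fun j _ => ite_eq_left_iff.2 fun hj => ?_
        simp [not_ne_iff.1 hj, Lcount, disc]
    _ = ∑ t, ∑ j, if disc x r t i j = true then 1 else 0 := sum_comm
    _ = ∑ t, if IsCompared (x t) (r t) i then 1 else 0 := sum_congr rfl fun t _ => ?_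
    _ = #{t | IsCompared (x t) (r t) i} := (card_filter _ _).symm
  split_ifs with h
  · obtain ⟨j, hj, hx⟩ := h
    rw [sum_eq_single_of_mem j (mem_univ j)]
    · simp [disc, hj, hx]
    · intro k _ hk
      exact if_neg fun hdisc => hk (hr t i k j (by simp_all [disc]) hj)
  · refine sum_eq_zero fun j _ => if_neg fun hdisc => h ⟨j, ?_⟩
    simpa [disc] using hdisc

/-- The number of users whose `k`-th random pairing yields an effective comparison of item `i`. -/
noncomputable def comparedCount (k : Fin K) (i : Fin m) (y : Fin n → UserData m K) : ℝ :=
  ∑ t, Set.indicator {d | IsCompared d.2 (d.1.2 k) i} 1 (y t)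

lemma comparedCount_eq_sum_Lcount {A X : Fin n → Fin m → Bool}
    {R : Fin K → Fin n → Fin m → Fin m → Bool} (hR : ∀ k t, IsPairing (obs A t) (R k t))
    (k : Fin K) (i : Fin m) :
    comparedCount k i (fun t => ((A t, (R · t)), X t)) =
      ((∑ j, if j ≠ i then Lcount (disc X (R k)) i j else 0 : ℕ) : ℝ) := by
  classical
  rw [sum_Lcount_disc_eq_card (fun t => (hR k t).2.2.2.1) i, comparedCount, natCast_card_filter]
  rfl

lemma iIndepFun_indicator_isCompared (k : Fin K) (i : Fin m) :
    iIndepFun (fun (t : Fin n) (y : Fin n → UserData m K) =>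
      Set.indicator {d | IsCompared d.2 (d.1.2 k) i} (1 : UserData m K → ℝ) (y t))
      (raschLaw K p ζ θ) :=
  iIndepFun_pi fun _ => (measurable_of_countable _).aemeasurable

lemma integral_indicator_isCompared (k : Fin K) (i : Fin m) (t : Fin n) :
    ∫ y, Set.indicator {d | IsCompared d.2 (d.1.2 k) i} (1 : UserData m K → ℝ) (y t)
        ∂raschLaw K p ζ θ =
      (userLaw K p fun i => unitInterval.sigmoid (θ i - ζ t)).real
        {d | IsCompared d.2 (d.1.2 k) i} := by
  rw [raschLaw, integral_comp_eval (μ := fun t => userLaw K p fun i =>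
    unitInterval.sigmoid (θ i - ζ t)) (measurable_of_countable _).aestronglyMeasurable,
    integral_indicator_one (Set.toFinite _).measurableSet]

lemma indicator_one_mem_Icc {α : Type*} (s : Set α) (a : α) :
    s.indicator (1 : α → ℝ) a ∈ Set.Icc 0 1 :=
  ⟨Set.indicator_nonneg (fun _ _ => zero_le_one) a,
    Set.indicator_le_self' (fun _ _ => zero_le_one) a⟩

lemma raschLaw_three_halves_mul_le_comparedCount (k : Fin K) (i : Fin m) :
    (raschLaw K p ζ θ).real {y | 3 / 2 * ((n : ℝ) * p) ≤ comparedCount k i y} ≤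
      Real.exp (-((n : ℝ) * p) / 16) := by
  refine measureReal_three_halves_mul_le_sum_le_exp (iIndepFun_indicator_isCompared k i)
    (fun t => (measurable_of_countable _).aemeasurable)
    (fun t => .of_forall fun y => indicator_one_mem_Icc _ _) ?_
  calc ∑ t : Fin n, _ ≤ ∑ _t : Fin n, (p : ℝ) := sum_le_sum fun t _ =>
        (integral_indicator_isCompared k i t).trans_le (userLaw_real_isCompared_le k i)
    _ = n * p := by simp

lemma div_le_userLaw_real_isCompared (hκ : 1 ≤ κ) {t : Fin n}
    (hζθ : ∀ i, |ζ t - θ i| ≤ Real.log κ) (hmp : 2 ≤ (m : ℝ) * p) (k : Fin K) (i : Fin m) :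
    p / (6 * κ) ≤ (userLaw K p fun i => unitInterval.sigmoid (θ i - ζ t)).real
      {d | IsCompared d.2 (d.1.2 k) i} := by
  have : 0 < κ := one_pos.trans_le hκ
  refine le_trans ?_ (le_userLaw_real_isCompared k (inv_nonneg.2 (by positivity : 0 ≤ 2 * κ))
    fun j _ => inv_two_mul_le_discordance hκ (abs_sub_comm (ζ t) (θ i) ▸ hζθ i)
      (abs_sub_comm (ζ t) (θ j) ▸ hζθ j))
  calc (p : ℝ) / (6 * κ) = (2 * κ)⁻¹ * (2 / 3 * (p * (1 / 2))) := by
        field_simp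
        ring
    _ ≤ _ := by
        gcongr
        · exact p.2.1
        · exact half_le_one_sub_one_sub_pow p.2.2 hmp

lemma raschLaw_comparedCount_le (hκ : 1 ≤ κ) (hζθ : ∀ t i, |ζ t - θ i| ≤ Real.log κ)
    (hmp : 2 ≤ (m : ℝ) * p) (k : Fin K) (i : Fin m) :
    (raschLaw K p ζ θ).real {y | comparedCount k i y ≤ (n : ℝ) * p / (24 * κ)} ≤
      Real.exp (-((n : ℝ) * p) / (24 * κ)) := by
  have hquarter : (n : ℝ) * p / (24 * κ) = n * p / (6 * κ) / 4 := by
    rw [div_div]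
    ring_nf
  rw [neg_div, hquarter, ← neg_div]
  refine measureReal_sum_le_div_four_le_exp (iIndepFun_indicator_isCompared k i)
    (fun t => (measurable_of_countable _).aemeasurable)
    (fun t => .of_forall fun y => indicator_one_mem_Icc _ _) ?_
  calc (n : ℝ) * p / (6 * κ) = ∑ _t : Fin n, (p : ℝ) / (6 * κ) := by
        simp [mul_div_assoc]
    _ ≤ _ := sum_le_sum fun t _ => (div_le_userLaw_real_isCompared hκ (hζθ t) hmp k i).trans_eq
        (integral_indicator_isCompared k i t).symm

lemma raschLaw_exists_comparedCount_le_or_le (hκ : 1 ≤ κ)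
    (hζθ : ∀ t i, |ζ t - θ i| ≤ Real.log κ) (hmp : 2 ≤ (m : ℝ) * p) (k : Fin K) :
    (raschLaw K p ζ θ).real {y | ∃ i, comparedCount k i y ≤ (n : ℝ) * p / (24 * κ) ∨
      3 / 2 * ((n : ℝ) * p) ≤ comparedCount k i y} ≤
        2 * m * Real.exp (-((n : ℝ) * p) / (24 * κ)) := by
  have hnp : 0 ≤ (n : ℝ) * p := mul_nonneg n.cast_nonneg p.2.1
  have hrate : Real.exp (-((n : ℝ) * p) / 16) ≤ Real.exp (-((n : ℝ) * p) / (24 * κ)) := by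
    rw [Real.exp_le_exp, neg_div, neg_div, neg_le_neg_iff]
    exact div_le_div_of_nonneg_left hnp (by norm_num) (by linarith)
  simp only [Set.ofPred_exists, Set.ofPred_or]
  calc _ ≤ ∑ i, (raschLaw K p ζ θ).real ({y | comparedCount k i y ≤ (n : ℝ) * p / (24 * κ)} ∪
          {y | 3 / 2 * ((n : ℝ) * p) ≤ comparedCount k i y}) := measureReal_iUnion_fintype_le _
    _ ≤ ∑ _i : Fin m, 2 * Real.exp (-((n : ℝ) * p) / (24 * κ)) := sum_le_sum fun i _ => by
        rw [two_mul]
        exact (measureReal_union_le _ _).trans <| add_le_add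
          (raschLaw_comparedCount_le hκ hζθ hmp k i)
          ((raschLaw_three_halves_mul_le_comparedCount k i).trans hrate)
    _ = 2 * m * Real.exp (-((n : ℝ) * p) / (24 * κ)) := by
        simp
        ring

theorem stmt_10_general {Ω : Type*} [MeasurableSpace Ω] {P : Measure Ω} [IsProbabilityMeasure P]
    {p : ℝ} {A X : Ω → Fin n → Fin m → Bool} {R : Ω → Fin K → Fin n → Fin m → Fin m → Bool}
    (hp0 : 0 ≤ p) (hp1 : p ≤ 1) (hκ : 1 ≤ κ) (hζθ : ∀ t i, |ζ t - θ i| ≤ Real.log κ)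
    (hmp : 2 ≤ (m : ℝ) * p) (hlaw : HasRaschLaw P p ζ θ A X R) (k : Fin K) :
    ENNReal.ofReal (1 - 2 * m * Real.exp (-((n : ℝ) * p) / (24 * κ))) ≤
      P {ω | ∀ i : Fin m,
        (n : ℝ) * p / (24 * κ) ≤
            ((∑ j, if j ≠ i then Lcount (disc (X ω) (R ω k)) i j else 0 : ℕ) : ℝ) ∧
          ((∑ j, if j ≠ i then Lcount (disc (X ω) (R ω k)) i j else 0 : ℕ) : ℝ) ≤
            3 / 2 * ((n : ℝ) * p)} := by
  lift p to unitInterval using ⟨hp0, hp1⟩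
  refine ofReal_one_sub_le_of_compl_le (by positivity) ?_
  set badCounts : Set (Fin n → UserData m K) := {y | ∃ i,
    comparedCount k i y ≤ (n : ℝ) * p / (24 * κ) ∨ 3 / 2 * ((n : ℝ) * p) ≤ comparedCount k i y}
  refine (measure_mono fun ω hω => ?_).trans <| (hlaw.measure_preimage_le badCounts).trans ?_
  · simp only [Set.mem_compl_iff, Set.mem_ofPred_eq, not_forall, not_and_or, not_le] at hω
    obtain ⟨i, hi⟩ := hω
    refine ⟨i, ?_⟩
    rw [comparedCount_eq_sum_Lcount (hlaw.1 ω)]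
    exact hi.imp le_of_lt le_of_lt
  · rw [← ofReal_measureReal]
    exact ENNReal.ofReal_le_ofReal (raschLaw_exists_comparedCount_le_or_le hκ hζθ hmp k)

end Degree

end RaschRP

open RaschRP in
/-- **Lemma A.2 (Degree bounds in the induced item-item graph `G_Y`).**
If `np ≥ C κ₂² log n`, `mp ≥ 2` and `m ≤ n^α`, then with probability at least `1 − 2n^{−10}`
every item `i` has weighted degree `d_i = Σ_{j≠i} L_{ij}` in `G_Y` satisfying
`np/(24κ₂) ≤ d_i ≤ (3/2)np`. -/
theorem stmt_10 (α : ℝ) (hα : 0 < α) :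
    ∃ C : ℝ, 0 < C ∧
      ∀ (n m : ℕ) (p κ₂ : ℝ) (Ω : Type) (mΩ : MeasurableSpace Ω) (P : Measure Ω),
        IsProbabilityMeasure P →
        ∀ (ζ : Fin n → ℝ) (θs : Fin m → ℝ) (A X : Ω → Fin n → Fin m → Bool)
          (R : Ω → Fin 1 → Fin n → Fin m → Fin m → Bool),
          0 < p → p ≤ 1 →
          1 ≤ κ₂ → (∀ t i, |ζ t - θs i| ≤ Real.log κ₂) →
          2 ≤ (m : ℝ) * p →
          C * κ₂ ^ 2 * Real.log n ≤ (n : ℝ) * p →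
          (m : ℝ) ≤ (n : ℝ) ^ α →
          HasRaschLaw P p ζ θs A X R →
          ENNReal.ofReal (1 - 2 / (n : ℝ) ^ 10) ≤
            P {ω | ∀ i : Fin m,
              (n : ℝ) * p / (24 * κ₂) ≤
                  ((∑ j, if j ≠ i then Lcount (disc (X ω) (R ω 0)) i j else 0 : ℕ) : ℝ) ∧
                ((∑ j, if j ≠ i then Lcount (disc (X ω) (R ω 0)) i j else 0 : ℕ) : ℝ) ≤
                  3 / 2 * ((n : ℝ) * p)} := by
  refine ⟨24 * (10 + α), by positivity, ?_⟩
  intro n m p κ₂ Ω _ P _ ζ θs A X R hp0 hp1 hκ hζθ hmp hnp hmn hlaw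
  have hn : (1 : ℝ) ≤ n := by
    refine Nat.one_le_cast.2 (Nat.pos_of_ne_zero ?_)
    rintro rfl
    have hm0 : (m : ℝ) ≤ 0 := by simpa [Real.zero_rpow hα.ne'] using hmn
    linarith [mul_nonpos_of_nonpos_of_nonneg hm0 hp0.le]
  have hfail := two_mul_mul_exp_neg_le_two_div_pow hα.le hn hκ hnp hmn
  exact (ENNReal.ofReal_le_ofReal (sub_le_sub_left hfail 1)).trans
    (stmt_10_general hp0.le hp1 hκ hζθ hmp hlaw 0)
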